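/- (Strong converse) For every λ ∈ (0,1) there exists a constant K (depending only on λ, a and d) such that for every classical–quantum channel W from a finite alphabet X with |X| = a into the density operators on ℂ^d and every (n,λ)-code (f,D) for W, |M| ≤ exp₂(n·C(W) + K·√n), where C(W) = max_P I(P;W). -/

import Mathlib

open Matrix BigOperators Finset
open scoped Classical ComplexOrder

noncomputable section

/-- Square complex matrices of size `d` (operators on `ℂ^d`). -/
abbrev Mat (d : ℕ) := Matrix (Fin d) (Fin d) ℂ

/-- Operators on the `n`-fold tensor power `(ℂ^d)^{⊗n}`, indexed by `Fin n → Fin d`. -/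
abbrev MatPow (d n : ℕ) := Matrix (Fin n → Fin d) (Fin n → Fin d) ℂ

/-- Tensor product `A 0 ⊗ A 1 ⊗ ⋯ ⊗ A (n-1)` of a family of `d × d` matrices. -/
def tensorPow {d n : ℕ} (A : Fin n → Mat d) : MatPow d n :=
  Matrix.of fun j k => ∏ i, A i (j i) (k i)

/-- Exponential to base 2. -/
def exp2 (t : ℝ) : ℝ := (2 : ℝ) ^ t

/-- `P` is a probability distribution on the finite set `X`. -/
def IsProbDist {X : Type*} [Fintype X] (P : X → ℝ) : Prop :=
  (∀ x, 0 ≤ P x) ∧ ∑ x, P x = 1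

/-- `ρ` is a density operator (a state): positive semidefinite with trace one. -/
def IsState {ι : Type*} [Fintype ι] [DecidableEq ι] (ρ : Matrix ι ι ℂ) : Prop :=
  ρ.PosSemidef ∧ ρ.trace = 1

/-- `N(x|x^n)`: number of occurrences of the letter `x` in the sequence `xs`. -/
def countIn {X : Type*} {n : ℕ} (x : X) (xs : Fin n → X) : ℕ :=
  (Finset.univ.filter fun i => xs i = x).card

/-- The variance-typical set `T^n_{P,δ}`. -/
def typicalSet {X : Type*} [Fintype X] (n : ℕ) (P : X → ℝ) (δ : ℝ) :
    Finset (Fin n → X) :=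
  Finset.univ.filter fun xs => ∀ x : X,
    |(countIn x xs : ℝ) - n * P x| ≤ δ * Real.sqrt n * Real.sqrt (P x * (1 - P x))

/-- Product (i.i.d.) probability `P^{⊗n}(A)` of a set `A` of sequences. -/
def prodProb {X : Type*} [Fintype X] {n : ℕ} (P : X → ℝ) (A : Finset (Fin n → X)) : ℝ :=
  ∑ xs ∈ A, ∏ i, P (xs i)

/-- Shannon entropy to base 2. -/
def shannonEntropy {X : Type*} [Fintype X] (P : X → ℝ) : ℝ :=
  -∑ x, P x * Real.logb 2 (P x)

/-- von Neumann entropy to base 2, `H(ρ) = -Tr(ρ log₂ ρ)`, via the eigenvalues. -/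
def vnEntropy {d : ℕ} (ρ : Mat d) : ℝ :=
  if h : ρ.IsHermitian then -∑ i, h.eigenvalues i * Real.logb 2 (h.eigenvalues i) else 0

/-- The constant `K = 2 log₂(e) / e`. -/
def Kconst : ℝ := 2 * Real.logb 2 (Real.exp 1) / Real.exp 1

/-- A diagonalization `ρ = Σ_j R j • π j` into one-dimensional mutually orthogonal
eigenprojectors, with eigenvalue list `R` a probability distribution. -/
def IsDiagonalization {d : ℕ} (ρ : Mat d) (R : Fin d → ℝ) (π : Fin d → Mat d) : Prop :=
  (∀ j, (π j).PosSemidef) ∧ (∀ j, π j * π j = π j) ∧ (∀ j, (π j).trace = 1) ∧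
    (∀ j k, j ≠ k → π j * π k = 0) ∧ (∑ j, π j = 1) ∧
    ρ = ∑ j, (R j : ℂ) • π j ∧ IsProbDist R

/-- The variance-typical projector `Π^n_{ρ,δ}` of a state with fixed diagonalization
`(R, π)`. -/
def typicalProj {d : ℕ} (n : ℕ) (R : Fin d → ℝ) (π : Fin d → Mat d) (δ : ℝ) : MatPow d n :=
  ∑ js ∈ typicalSet n R δ, tensorPow fun i => π (js i)

/-- `B` is an `η`-shadow of the state `σ`: `0 ≤ B ≤ 1` and `Tr(σB) ≥ η`. -/
def IsShadow {ι : Type*} [Fintype ι] [DecidableEq ι] (σ B : Matrix ι ι ℂ) (η : ℝ) : Prop :=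
  B.PosSemidef ∧ ((1 : Matrix ι ι ℂ) - B).PosSemidef ∧ η ≤ (Matrix.trace (σ * B)).re

/-- Average state `PW = Σ_x P(x) W_x` of a cq-channel under input distribution `P`. -/
def avgState {X : Type*} [Fintype X] {d : ℕ} (P : X → ℝ) (W : X → Mat d) : Mat d :=
  ∑ x, (P x : ℂ) • W x

/-- Conditional von Neumann entropy `H(W|P) = Σ_x P(x) H(W_x)`. -/
def condEntropy {X : Type*} [Fintype X] {d : ℕ} (P : X → ℝ) (W : X → Mat d) : ℝ :=
  ∑ x, P x * vnEntropy (W x)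

/-- Mutual information `I(P;W) = H(PW) − H(W|P)`. -/
def mutualInfo {X : Type*} [Fintype X] {d : ℕ} (P : X → ℝ) (W : X → Mat d) : ℝ :=
  vnEntropy (avgState P W) - condEntropy P W

/-- Capacity `C(W) = max_P I(P;W)`. -/
def capacity {X : Type*} [Fintype X] {d : ℕ} (W : X → Mat d) : ℝ :=
  sSup {c | ∃ P : X → ℝ, IsProbDist P ∧ c = mutualInfo P W}

/-- `(f, D)` (with message set `M` inside the outcome index set `M'`) is an
`(n,λ)`-code for the cq-channel `W`: the `D m` are positive semidefinite, sum to the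
identity, and each message is decoded correctly with probability at least `1 - λ`. -/
def IsCode {X : Type*} [Fintype X] {d n : ℕ} (W : X → Mat d) (lam : ℝ)
    {M' : Type*} [Fintype M'] (M : Finset M') (f : M' → Fin n → X)
    (D : M' → MatPow d n) : Prop :=
  (∀ m, (D m).PosSemidef) ∧ (∑ m, D m = 1) ∧
    ∀ m ∈ M, 1 - lam ≤ (Matrix.trace (tensorPow (fun i => W (f m i)) * D m)).re

/-- `N(n,λ)`: maximal size of an `(n,λ)`-code for `W`. -/
def maxCodeSize {X : Type*} [Fintype X] (d : ℕ) (W : X → Mat d) (n : ℕ) (lam : ℝ) : ℕ :=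
  sSup {k | ∃ (M' : Type) (_ : Fintype M') (M : Finset M') (f : M' → Fin n → X)
    (D : M' → MatPow d n), IsCode W lam M f D ∧ M.card = k}

/-- Trace norm `‖A‖₁ = Tr|A|`: the sum of the singular values. -/
def traceNorm {ι : Type*} [Fintype ι] [DecidableEq ι] (A : Matrix ι ι ℂ) : ℝ :=
  ∑ i, Real.sqrt ((Matrix.posSemidef_conjTranspose_mul_self A).1.eigenvalues i)

/-- Trace distance `D(ρ,σ) = ½‖ρ−σ‖₁`. -/
def traceDist {ι : Type*} [Fintype ι] [DecidableEq ι] (ρ σ : Matrix ι ι ℂ) : ℝ :=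
  traceNorm (ρ - σ) / 2

/-- (Pure-state) fidelity `F(ρ,σ) = Tr(ρσ)`. -/
def fidelity {ι : Type*} [Fintype ι] [DecidableEq ι] (ρ σ : Matrix ι ι ℂ) : ℝ :=
  (Matrix.trace (ρ * σ)).re

/-- A pure state: the rank-one orthogonal projector `|ψ⟩⟨ψ|` onto the span of a
unit vector `ψ`. -/
def IsPureState {ι : Type*} [Fintype ι] (ρ : Matrix ι ι ℂ) : Prop :=
  ∃ ψ : ι → ℂ, (∑ i, star (ψ i) * ψ i) = 1 ∧ ρ = Matrix.vecMulVec ψ (star ψ)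

/-- The set of eigenvalue-index sequences `js` that are variance-typical, with
constant `δ`, for the distribution `q x` on each block `I_x = {i : xs i = x}`. -/
def condTypicalSet {X : Type*} [Fintype X] {n d : ℕ} (xs : Fin n → X)
    (q : X → Fin d → ℝ) (δ : ℝ) : Finset (Fin n → Fin d) :=
  Finset.univ.filter fun js => ∀ (x : X) (k : Fin d),
    |((Finset.univ.filter fun i => xs i = x ∧ js i = k).card : ℝ) - (countIn x xs : ℝ) * q x k|
      ≤ δ * Real.sqrt (countIn x xs) * Real.sqrt (q x k * (1 - q x k))

/-- Conditional variance-typical projector `Π^n_{W,δ}(x^n) = ⊗_{x∈X} Π^{I_x}_{W_x,δ}`,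
with respect to fixed diagonalizations `W_x = Σ_j (q x j) • (π x j)`. -/
def condTypicalProj {X : Type*} [Fintype X] {d : ℕ} {n : ℕ} (xs : Fin n → X)
    (q : X → Fin d → ℝ) (π : X → Fin d → Mat d) (δ : ℝ) : MatPow d n :=
  ∑ js ∈ condTypicalSet xs q δ, tensorPow fun i => π (xs i) (js i)

open scoped MatrixOrder Matrix.Norms.L2Operator in
lemma sc_trace_mul_nonneg {ι : Type*} [Fintype ι] [DecidableEq ι] {A B : Matrix ι ι ℂ}
    (hA : A.PosSemidef) (hB : B.PosSemidef) : 0 ≤ (A * B).trace.re := by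
  obtain ⟨C, rfl⟩ := CStarAlgebra.nonneg_iff_eq_star_mul_self.mp hB.nonneg
  rw [Matrix.star_eq_conjTranspose]
  have h := (hA.mul_mul_conjTranspose_same C).trace_nonneg
  rw [Matrix.mul_assoc, Matrix.trace_mul_comm, Matrix.mul_assoc] at h
  exact (Complex.le_def.mp h).1

lemma sc_one_shot {ι : Type*} [Fintype ι] [DecidableEq ι] {ρ₁ ρ₂ D E : Matrix ι ι ℂ} {t : ℝ}
    (h₁ : ρ₁.PosSemidef) (h₂ : ρ₂.PosSemidef) (hD : D.PosSemidef)
    (hD1 : (1 - D).PosSemidef) (hE : Eᴴ = E) (hEE : E * E = E)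
    (ht : ((t : ℂ) • (1 : Matrix ι ι ℂ) - ρ₁).PosSemidef) :
    ((ρ₁ + ρ₂) * D).trace.re ≤ ρ₂.trace.re + 2 * t * (D * E).trace.re
      + 2 * ((ρ₁ + ρ₂) * (1 - E)).trace.re := by
  have hF : (1 - E : Matrix ι ι ℂ)ᴴ = 1 - E := by simp [hE]
  have hFF : (1 - E) * (1 - E) = 1 - E := by
    rw [Matrix.mul_sub, Matrix.sub_mul, Matrix.sub_mul, hEE]; simp
  have hFps : (1 - E).PosSemidef := by
    have := Matrix.posSemidef_conjTranspose_mul_self (1 - E)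
    rwa [hF, hFF] at this
  have a1 : 0 ≤ (ρ₂ * (1 - D)).trace.re := sc_trace_mul_nonneg h₂ hD1
  have a2 : 0 ≤ (ρ₂ * (1 - E)).trace.re := sc_trace_mul_nonneg h₂ hFps
  -- pinching
  have a3 : 0 ≤ (((E - (1 - E)) * ρ₁ * (E - (1 - E))ᴴ) * D).trace.re :=
    sc_trace_mul_nonneg (h₁.mul_mul_conjTranspose_same _) hD
  have a4 : 0 ≤ (((t : ℂ) • (1 : Matrix ι ι ℂ) - ρ₁) * (E * D * Eᴴ)).trace.re :=
    sc_trace_mul_nonneg ht (hD.mul_mul_conjTranspose_same _)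
  have a5 : 0 ≤ (((1 - E) * ρ₁ * (1 - E)ᴴ) * (1 - D)).trace.re :=
    sc_trace_mul_nonneg (h₁.mul_mul_conjTranspose_same _) hD1
  have e3 : (E - (1 - E))ᴴ = E - (1 - E) := by simp [hE]
  rw [e3] at a3
  rw [hE] at a4
  rw [hF] at a5
  have key3 : ((E - (1 - E)) * ρ₁ * (E - (1 - E))) * D
      = (2 : ℂ) • (E * ρ₁ * E * D) + (2 : ℂ) • ((1 - E) * ρ₁ * (1 - E) * D) - ρ₁ * D := by
    simp only [two_smul]; noncomm_ring
  have t4 : (((t : ℂ) • (1 : Matrix ι ι ℂ) - ρ₁) * (E * D * E)).trace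
      = t * (D * E).trace - (E * ρ₁ * E * D).trace := by
    rw [Matrix.sub_mul, Matrix.smul_mul, Matrix.one_mul, Matrix.trace_sub, Matrix.trace_smul,
      smul_eq_mul]
    congr 1
    · congr 1
      rw [Matrix.trace_mul_comm, ← Matrix.mul_assoc, hEE, Matrix.trace_mul_comm]
    · rw [← Matrix.mul_assoc, Matrix.trace_mul_comm]
      simp only [Matrix.mul_assoc]
  have t5 : (((1 - E) * ρ₁ * (1 - E)) * (1 - D)).trace
      = (ρ₁ * (1 - E)).trace - ((1 - E) * ρ₁ * (1 - E) * D).trace := by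
    rw [Matrix.mul_sub, Matrix.trace_sub, Matrix.mul_one, Matrix.trace_mul_comm,
      ← Matrix.mul_assoc, hFF, Matrix.trace_mul_comm]
  rw [key3] at a3
  rw [t4] at a4
  rw [t5] at a5
  rw [Matrix.mul_sub, Matrix.mul_one, Matrix.trace_sub] at a1
  simp only [Matrix.trace_sub, Matrix.trace_add, Matrix.trace_smul, smul_eq_mul, Complex.sub_re,
    Complex.add_re, Complex.re_ofNat, Complex.im_ofNat, Complex.mul_re, Complex.ofReal_re, Complex.ofReal_im,
    Matrix.add_mul, zero_mul, sub_zero] at *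
  nlinarith

lemma sc_sum_prod {n d : ℕ} {R : Type*} [CommSemiring R] (f : Fin n → Fin d → R) :
    ∑ js : Fin n → Fin d, ∏ i, f i (js i) = ∏ i, ∑ k, f i k :=
  (Fintype.prod_sum f).symm

lemma sc_tensor_mul {n d : ℕ} (A B : Fin n → Mat d) :
    tensorPow A * tensorPow B = tensorPow (fun i => A i * B i) := by
  ext j k
  simp only [tensorPow, Matrix.mul_apply, Matrix.of_apply, ← Finset.prod_mul_distrib]
  exact sc_sum_prod (fun i l => A i (j i) l * B i l (k i))

lemma sc_tensor_conj {n d : ℕ} (A : Fin n → Mat d) :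
    (tensorPow A)ᴴ = tensorPow (fun i => (A i)ᴴ) := by
  ext j k
  simp [tensorPow, Matrix.conjTranspose_apply]

lemma sc_tensor_diag {n d : ℕ} (q : Fin n → Fin d → ℂ) :
    tensorPow (fun i => Matrix.diagonal (q i)) = Matrix.diagonal (fun js => ∏ i, q i (js i)) := by
  ext j k
  by_cases h : j = k
  · subst h; simp [tensorPow]
  · obtain ⟨i, hi⟩ := Function.ne_iff.mp h
    simp only [tensorPow, Matrix.of_apply]
    rw [Matrix.diagonal_apply_ne _ h]
    exact Finset.prod_eq_zero (Finset.mem_univ i) (Matrix.diagonal_apply_ne _ hi)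

lemma sc_tensor_one {n d : ℕ} : tensorPow (fun _ : Fin n => (1 : Mat d)) = 1 := by
  have := sc_tensor_diag (n := n) (d := d) (fun _ _ => 1)
  simpa using this

lemma sc_second_moment {n d : ℕ} (p h : Fin n → Fin d → ℝ) (hp1 : ∀ i, ∑ k, p i k = 1)
    (hh : ∀ i, ∑ k, p i k * h i k = 0) :
    ∑ js : Fin n → Fin d, (∏ i, p i (js i)) * (∑ i, h i (js i)) ^ 2
      = ∑ i, ∑ k, p i k * h i k ^ 2 := by
  have key : ∀ a b : Fin n, ∑ js : Fin n → Fin d, (∏ i, p i (js i)) * (h a (js a) * h b (js b))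
      = if a = b then ∑ k, p a k * h a k ^ 2 else 0 := by
    intro a b
    have e : ∀ js : Fin n → Fin d, (∏ i, p i (js i)) * (h a (js a) * h b (js b))
        = ∏ i, (p i (js i) * ((if i = a then h i (js i) else 1) *
            (if i = b then h i (js i) else 1))) := by
      intro js
      rw [Finset.prod_mul_distrib, Finset.prod_mul_distrib]
      simp
    simp_rw [e]
    rw [sc_sum_prod (fun i k => p i k * ((if i = a then h i k else 1) *
            (if i = b then h i k else 1)))]
    split_ifs with hab
    · subst hab
      rw [Finset.prod_eq_single a]
      · simp [sq]
      · intro i _ hi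
        simp [hi, hp1]
      · simp
    · apply Finset.prod_eq_zero (Finset.mem_univ a)
      simp [hab, hh]
  simp_rw [sq (∑ i, h i _), Finset.sum_mul_sum, Finset.mul_sum]
  rw [Finset.sum_comm]
  apply Finset.sum_congr rfl
  intro a _
  rw [Finset.sum_comm]
  simp_rw [key]
  simp

lemma sc_cheb {n d : ℕ} (p g : Fin n → Fin d → ℝ) (hp0 : ∀ i k, 0 ≤ p i k)
    (hp1 : ∀ i, ∑ k, p i k = 1) (s : ℝ) (hs : 0 < s) (S : Finset (Fin n → Fin d))
    (hS : ∀ js ∈ S, s ≤ |∑ i, g i (js i) - ∑ i, ∑ k, p i k * g i k| ∨ ∏ i, p i (js i) = 0) :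
    ∑ js ∈ S, ∏ i, p i (js i) ≤ (∑ i, ∑ k, p i k * g i k ^ 2) / s ^ 2 := by
  set h : Fin n → Fin d → ℝ := fun i k => g i k - ∑ l, p i l * g i l with hdef
  have hh : ∀ i, ∑ k, p i k * h i k = 0 := by
    intro i
    simp only [hdef, mul_sub, Finset.sum_sub_distrib, ← Finset.sum_mul, hp1]
    simp
  have hm := sc_second_moment p h hp1 hh
  have hvar : ∑ i, ∑ k, p i k * h i k ^ 2 ≤ ∑ i, ∑ k, p i k * g i k ^ 2 := by
    apply Finset.sum_le_sum
    intro i _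
    have : ∑ k, p i k * g i k ^ 2 = ∑ k, p i k * h i k ^ 2 + (∑ l, p i l * g i l) ^ 2 := by
      have e : ∀ k, p i k * g i k ^ 2 = p i k * h i k ^ 2
          + 2 * (∑ l, p i l * g i l) * (p i k * h i k) + (∑ l, p i l * g i l) ^ 2 * p i k := by
        intro k; simp only [hdef]; ring
      rw [Finset.sum_congr rfl (fun k _ => e k), Finset.sum_add_distrib, Finset.sum_add_distrib,
        ← Finset.mul_sum, ← Finset.mul_sum, hh, hp1]
      ring
    rw [this]
    nlinarith [sq_nonneg (∑ l, p i l * g i l)]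
  rw [le_div_iff₀ (by positivity)]
  refine le_trans ?_ hvar
  rw [← hm, Finset.sum_mul]
  refine le_trans (Finset.sum_le_sum (g := fun js => (∏ i, p i (js i)) * (∑ i, h i (js i)) ^ 2) ?_)
    (Finset.sum_le_sum_of_subset_of_nonneg (Finset.subset_univ _) ?_)
  · intro js hjs
    rcases hS js hjs with h1 | h1
    · apply mul_le_mul_of_nonneg_left _ (Finset.prod_nonneg fun i _ => hp0 i _)
      rw [← sq_abs (∑ i, h i (js i))]
      have : ∑ i, h i (js i) = ∑ i, g i (js i) - ∑ i, ∑ k, p i k * g i k := by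
        simp [hdef]
      rw [this]
      gcongr
    · simp [h1]
  · intro js _ _
    exact mul_nonneg (Finset.prod_nonneg fun i _ => hp0 i _) (sq_nonneg _)

lemma sc_log2 : (1 / 2 : ℝ) ≤ Real.log 2 := by
  have := Real.log_two_gt_d9; linarith

lemma sc_logb_sq {s : ℝ} (h0 : 0 ≤ s) (h1 : s ≤ 1) : s * Real.logb 2 s ^ 2 ≤ 16 := by
  rcases h0.eq_or_lt with rfl | h0
  · simp
  have hx : 0 < Real.sqrt s := Real.sqrt_pos.mpr h0
  have hx1 : Real.sqrt s ≤ 1 := Real.sqrt_le_one.mpr h1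
  have ha := (Real.abs_log_mul_self_lt _ hx hx1).le
  rw [Real.log_sqrt h0.le] at ha
  have hb : (Real.log s / 2 * Real.sqrt s) ^ 2 ≤ 1 := by
    rw [← sq_abs]; exact pow_le_one₀ (abs_nonneg _) ha
  rw [mul_pow, Real.sq_sqrt h0.le] at hb
  have h2 := sc_log2
  unfold Real.logb
  rw [div_pow, mul_div_assoc', div_le_iff₀ (by positivity)]
  nlinarith

lemma sc_negmullog {s : ℝ} (h0 : 0 ≤ s) (h1 : s ≤ 1) :
    0 ≤ -(s * Real.logb 2 s) ∧ -(s * Real.logb 2 s) ≤ 2 := by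
  rcases h0.eq_or_lt with rfl | h0
  · simp
  have ha := (abs_le.mp (Real.abs_log_mul_self_lt _ h0 h1).le).1
  have h2 := sc_log2
  have hn := Real.log_nonpos h0.le h1
  have e : -(s * Real.logb 2 s) = (-(Real.log s * s)) / Real.log 2 := by
    unfold Real.logb; ring
  rw [e]
  constructor
  · apply div_nonneg _ (by linarith)
    nlinarith
  · rw [div_le_iff₀ (by linarith)]
    nlinarith

lemma sc_spec {d : ℕ} (ρ : Mat d) (h : IsState ρ) : ∃ (q : Fin d → ℝ) (U : Mat d),
    Uᴴ * U = 1 ∧ U * Uᴴ = 1 ∧ ρ = U * Matrix.diagonal (fun k => (q k : ℂ)) * Uᴴ ∧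
    (∀ k, 0 ≤ q k) ∧ ∑ k, q k = 1 ∧ vnEntropy ρ = -∑ k, q k * Real.logb 2 (q k) := by
  have hH := h.1.1
  refine ⟨hH.eigenvalues, hH.eigenvectorUnitary, ?_, ?_, ?_, ?_, ?_, ?_⟩
  · exact (Matrix.mem_unitaryGroup_iff').mp hH.eigenvectorUnitary.2
  · exact (Matrix.mem_unitaryGroup_iff).mp hH.eigenvectorUnitary.2
  · exact hH.spectral_theorem
  · exact h.1.eigenvalues_nonneg
  · have := hH.trace_eq_sum_eigenvalues
    rw [h.2] at this
    have h2 : ((∑ i, hH.eigenvalues i : ℝ) : ℂ) = 1 := by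
      rw [this]; push_cast; rfl
    exact_mod_cast h2
  · unfold vnEntropy
    rw [dif_pos hH]

lemma sc_avg_state {X : Type*} [Fintype X] {d : ℕ} {P : X → ℝ} {W : X → Mat d}
    (hP : IsProbDist P) (hW : ∀ x, IsState (W x)) : IsState (avgState P W) := by
  constructor
  · apply Matrix.posSemidef_sum
    intro x _
    apply (hW x).1.smul
    exact_mod_cast hP.1 x
  · unfold avgState
    rw [Matrix.trace_sum]
    simp only [Matrix.trace_smul, (hW _).2, smul_eq_mul, mul_one]
    exact_mod_cast hP.2

lemma sc_le_one {ι : Type*} [Fintype ι] {q : ι → ℝ} (h0 : ∀ k, 0 ≤ q k) (h1 : ∑ k, q k = 1) (k : ι) :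
    q k ≤ 1 := by
  rw [← h1]; exact Finset.single_le_sum (fun i _ => h0 i) (Finset.mem_univ k)

lemma sc_entropy_bounds {d : ℕ} {ρ : Mat d} (h : IsState ρ) :
    0 ≤ vnEntropy ρ ∧ vnEntropy ρ ≤ 2 * d := by
  obtain ⟨q, U, -, -, -, h0, h1, he⟩ := sc_spec ρ h
  rw [he, ← Finset.sum_neg_distrib]
  constructor
  · exact Finset.sum_nonneg fun k _ => (sc_negmullog (h0 k) (sc_le_one h0 h1 k)).1
  · refine (Finset.sum_le_card_nsmul _ _ 2 fun k _ =>
      (sc_negmullog (h0 k) (sc_le_one h0 h1 k)).2).trans ?_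
    simp; linarith

lemma sc_le_capacity {X : Type*} [Fintype X] {d : ℕ} {P : X → ℝ} {W : X → Mat d}
    (hP : IsProbDist P) (hW : ∀ x, IsState (W x)) : mutualInfo P W ≤ capacity W := by
  refine le_csSup (s := {c | ∃ P : X → ℝ, IsProbDist P ∧ c = mutualInfo P W}) ⟨2 * d, ?_⟩ ⟨P, hP, rfl⟩
  rintro c ⟨Q, hQ, rfl⟩
  have h1 := (sc_entropy_bounds (sc_avg_state hQ hW)).2
  have h2 : 0 ≤ condEntropy Q W :=
    Finset.sum_nonneg fun x _ => mul_nonneg (hQ.1 x) (sc_entropy_bounds (hW x)).1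
  unfold mutualInfo
  linarith

lemma sc_card_A {n d : ℕ} (s : Fin d → ℝ) (hs0 : ∀ k, 0 ≤ s k) (hs1 : ∑ k, s k = 1) (b : ℝ)
    (A : Finset (Fin n → Fin d))
    (hA : ∀ js ∈ A, (∀ i, 0 < s (js i)) ∧ -∑ i, Real.logb 2 (s (js i)) ≤ b) :
    (A.card : ℝ) ≤ (2 : ℝ) ^ b := by
  have h1 : ∑ js ∈ A, (2 : ℝ) ^ (-b) ≤ 1 := by
    calc ∑ js ∈ A, (2 : ℝ) ^ (-b) ≤ ∑ js ∈ A, ∏ i, s (js i) := by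
          apply Finset.sum_le_sum
          intro js hjs
          obtain ⟨hp, hb⟩ := hA js hjs
          rw [← Real.le_logb_iff_rpow_le (by norm_num) (Finset.prod_pos fun i _ => hp i),
            Real.logb_prod _ _ (fun i _ => (hp i).ne')]
          linarith
      _ ≤ ∑ js : Fin n → Fin d, ∏ i, s (js i) :=
          Finset.sum_le_sum_of_subset_of_nonneg (Finset.subset_univ _)
            fun js _ _ => Finset.prod_nonneg fun i _ => hs0 _
      _ = 1 := by
          rw [sc_sum_prod (fun _ k => s k)]
          simp [hs1]
  rw [Finset.sum_const, nsmul_eq_mul, Real.rpow_neg (by norm_num), ← div_eq_mul_inv,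
    div_le_one (by positivity)] at h1
  exact h1

lemma sc_tail_A {n d : ℕ} (hn : 0 < n) (p : Fin n → Fin d → ℝ) (hp0 : ∀ i k, 0 ≤ p i k)
    (hp1 : ∀ i, ∑ k, p i k = 1) (s : Fin d → ℝ) (hs0 : ∀ k, 0 ≤ s k) (hs1 : ∑ k, s k = 1)
    (hps : ∀ k, ∑ i, p i k = n * s k) (δ ε : ℝ) (hδ : 0 < δ) (hε : 16 * d ≤ ε * δ ^ 2)
    (S : Finset (Fin n → Fin d))
    (hS : ∀ js ∈ S, ¬ ((∀ i, 0 < s (js i)) ∧ -∑ i, Real.logb 2 (s (js i))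
      ≤ n * (-∑ k, s k * Real.logb 2 (s k)) + δ * Real.sqrt n)) :
    ∑ js ∈ S, ∏ i, p i (js i) ≤ ε := by
  have hn' : (0 : ℝ) < n := by exact_mod_cast hn
  have hsn : 0 < Real.sqrt n := Real.sqrt_pos.mpr hn'
  have hmean : ∑ i, ∑ k, p i k * (-Real.logb 2 (s k)) = n * (-∑ k, s k * Real.logb 2 (s k)) := by
    rw [Finset.sum_comm]
    simp_rw [← Finset.sum_mul, hps]
    rw [← Finset.sum_neg_distrib, Finset.mul_sum]
    exact Finset.sum_congr rfl fun k _ => by ring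
  have hsec : ∑ i, ∑ k, p i k * (-Real.logb 2 (s k)) ^ 2 ≤ n * (16 * d) := by
    rw [Finset.sum_comm]
    simp_rw [← Finset.sum_mul, hps]
    calc ∑ k, n * s k * (-Real.logb 2 (s k)) ^ 2 ≤ ∑ k : Fin d, (n : ℝ) * 16 := by
          apply Finset.sum_le_sum
          intro k _
          rw [mul_assoc, neg_sq]
          exact mul_le_mul_of_nonneg_left (sc_logb_sq (hs0 k) (sc_le_one hs0 hs1 k)) hn'.le
      _ = n * (16 * d) := by simp; ring
  refine (sc_cheb p (fun _ k => -Real.logb 2 (s k)) hp0 hp1 (δ * Real.sqrt n) (by positivity) S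
    ?_).trans ?_
  · intro js hjs
    by_cases hz : ∀ i, 0 < s (js i)
    · left
      have := hS js hjs
      rw [not_and, not_le] at this
      have h2 := this hz
      rw [hmean]
      refine le_trans ?_ (le_abs_self _)
      rw [Finset.sum_neg_distrib]
      linarith
    · right
      push Not at hz
      obtain ⟨i, hi⟩ := hz
      apply Finset.prod_eq_zero (Finset.mem_univ i)
      have h0 : s (js i) = 0 := le_antisymm hi (hs0 _)
      have h1 := hps (js i)
      rw [h0, mul_zero, Finset.sum_eq_zero_iff_of_nonneg (fun l _ => hp0 l _)] at h1
      exact h1 i (Finset.mem_univ i)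
  · rw [div_le_iff₀ (by positivity), mul_pow, Real.sq_sqrt hn'.le]
    nlinarith

lemma sc_tail_B {n d : ℕ} (hn : 0 < n) (q : Fin n → Fin d → ℝ) (hq0 : ∀ i k, 0 ≤ q i k)
    (hq1 : ∀ i, ∑ k, q i k = 1) (h : ℝ)
    (hh : ∑ i, (-∑ k, q i k * Real.logb 2 (q i k)) = h) (δ ε : ℝ) (hδ : 0 < δ)
    (hε : 16 * d ≤ ε * δ ^ 2) (S : Finset (Fin n → Fin d))
    (hS : ∀ js ∈ S, ¬ (∏ i, q i (js i) ≤ (2 : ℝ) ^ (-h + δ * Real.sqrt n))) :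
    ∑ js ∈ S, ∏ i, q i (js i) ≤ ε := by
  have hn' : (0 : ℝ) < n := by exact_mod_cast hn
  have hsn : 0 < Real.sqrt n := Real.sqrt_pos.mpr hn'
  have hmean : ∑ i, ∑ k, q i k * Real.logb 2 (q i k) = -h := by
    rw [← hh, Finset.sum_neg_distrib, neg_neg]
  have hsec : ∑ i, ∑ k, q i k * Real.logb 2 (q i k) ^ 2 ≤ n * (16 * d) := by
    calc ∑ i, ∑ k, q i k * Real.logb 2 (q i k) ^ 2 ≤ ∑ i : Fin n, ∑ k : Fin d, (16 : ℝ) := by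
          apply Finset.sum_le_sum
          intro i _
          apply Finset.sum_le_sum
          intro k _
          exact sc_logb_sq (hq0 i k) (sc_le_one (hq0 i) (hq1 i) k)
      _ = n * (16 * d) := by
          simp only [Finset.sum_const, Finset.card_univ, Fintype.card_fin, nsmul_eq_mul]; ring
  refine (sc_cheb q (fun i k => Real.logb 2 (q i k)) hq0 hq1 (δ * Real.sqrt n) (by positivity) S
    ?_).trans ?_
  · intro js hjs
    left
    have h1 := not_le.mp (hS js hjs)
    have hpos : 0 < ∏ i, q i (js i) := lt_trans (by positivity) h1
    have hne : ∀ i, q i (js i) ≠ 0 := fun i => (Finset.prod_ne_zero_iff.mp hpos.ne') i (Finset.mem_univ i)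
    rw [← Real.lt_logb_iff_rpow_lt (by norm_num) hpos, Real.logb_prod _ _ (fun i _ => hne i)] at h1
    rw [hmean]
    refine le_trans ?_ (le_abs_self _)
    linarith
  · rw [div_le_iff₀ (by positivity), mul_pow, Real.sq_sqrt hn'.le]
    nlinarith

lemma sc_trace_conj_diag {ι : Type*} [Fintype ι] [DecidableEq ι] (ρ V : Matrix ι ι ℂ) (c : ι → ℂ) :
    (ρ * (V * Matrix.diagonal c * Vᴴ)).trace = ∑ j, (Vᴴ * ρ * V) j j * c j := by
  have : (ρ * (V * Matrix.diagonal c * Vᴴ)).trace = ((Vᴴ * ρ * V) * Matrix.diagonal c).trace := by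
    rw [← Matrix.mul_assoc, Matrix.trace_mul_comm, ← Matrix.mul_assoc]
    simp only [Matrix.mul_assoc]
  rw [this]
  simp [Matrix.trace, Matrix.mul_diagonal]

lemma sc_type {X : Type*} [Fintype X] {d n : ℕ} (hn : 0 < n) (W : X → Mat d)
    (hW : ∀ x, IsState (W x)) (P : X → ℝ) (hP : IsProbDist P) (lam δ ε : ℝ) (hδ : 0 < δ)
    (hε : 16 * d ≤ ε * δ ^ 2) {M' : Type*} [Fintype M'] (M : Finset M') (f : M' → Fin n → X)
    (D : M' → MatPow d n) (hcode : IsCode W lam M f D)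
    (htype : ∀ m ∈ M, ∀ g : X → ℝ, ∑ i, g (f m i) = n * ∑ x, P x * g x) :
    (M.card : ℝ) * (1 - lam - 3 * ε) ≤
      2 * (2 : ℝ) ^ (n * mutualInfo P W + 2 * δ * Real.sqrt n) := by
  obtain ⟨hDps, hDsum, hdec⟩ := hcode
  obtain ⟨s, V0, hV1, hV2, hσ, hs0, hs1, hsH⟩ := sc_spec _ (sc_avg_state hP hW)
  choose q U hU1 hU2 hWU hq0 hq1 hqH using fun x => sc_spec (W x) (hW x)
  set α : ℝ := n * vnEntropy (avgState P W) + δ * Real.sqrt n with hα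
  set β : ℝ := -(n * condEntropy P W) + δ * Real.sqrt n with hβ
  set V : MatPow d n := tensorPow (fun _ => V0) with hV
  have hVV : V * Vᴴ = 1 := by
    rw [hV, sc_tensor_conj, sc_tensor_mul, hV2, sc_tensor_one]
  have hVV' : Vᴴ * V = 1 := by
    rw [hV, sc_tensor_conj, sc_tensor_mul, hV1, sc_tensor_one]
  set A : Finset (Fin n → Fin d) := Finset.univ.filter fun js =>
    (∀ i, 0 < s (js i)) ∧ -∑ i, Real.logb 2 (s (js i)) ≤ α with hA
  have hAcard : (A.card : ℝ) ≤ (2 : ℝ) ^ α :=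
    sc_card_A s hs0 hs1 α A (fun js hjs => (Finset.mem_filter.mp hjs).2)
  set E : MatPow d n := V * Matrix.diagonal (fun js => if js ∈ A then (1 : ℂ) else 0) * Vᴴ with hE
  have hEH : Eᴴ = E := by
    rw [hE, Matrix.conjTranspose_mul, Matrix.conjTranspose_mul, Matrix.conjTranspose_conjTranspose,
      Matrix.diagonal_conjTranspose, ← Matrix.mul_assoc]
    congr 3
    ext js
    simp only [Pi.star_apply]
    split_ifs <;> simp
  have hEE : E * E = E := by
    have : E * E = V * (Matrix.diagonal (fun js => if js ∈ A then (1 : ℂ) else 0) * (Vᴴ * V) *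
        Matrix.diagonal (fun js => if js ∈ A then (1 : ℂ) else 0)) * Vᴴ := by
      rw [hE]; simp only [Matrix.mul_assoc]
    rw [this, hVV', Matrix.mul_one, Matrix.diagonal_mul_diagonal]
    rw [hE]
    congr 3
    ext js
    split_ifs <;> simp
  have hFE : 1 - E = V * Matrix.diagonal (fun js => if js ∈ A then (0 : ℂ) else 1) * Vᴴ := by
    rw [← hVV, hE, ← Matrix.sub_mul]
    congr 1
    nth_rewrite 1 [← Matrix.mul_one V]
    rw [← Matrix.mul_sub]
    congr 1
    rw [← Matrix.diagonal_one, Matrix.diagonal_sub]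
    congr 1
    ext js
    split_ifs <;> simp
  have hEtr : E.trace = A.card := by
    have := sc_trace_conj_diag 1 V (fun js => if js ∈ A then (1 : ℂ) else 0)
    rw [Matrix.one_mul, ← hE, Matrix.mul_one, hVV'] at this
    rw [this]
    simp
  have hEps : E.PosSemidef := by
    have := Matrix.posSemidef_conjTranspose_mul_self E
    rwa [hEH, hEE] at this
  -- diagonal distributions
  set p : X → Fin d → ℝ := fun x k => ((V0ᴴ * W x * V0) k k).re with hp
  have hpps : ∀ x, (V0ᴴ * W x * V0).PosSemidef := fun x =>
    (hW x).1.conjTranspose_mul_mul_same V0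
  have hpC : ∀ x k, (V0ᴴ * W x * V0) k k = (p x k : ℂ) := by
    intro x k
    have := (hpps x).diag_nonneg (i := k)
    exact Complex.ext rfl (by simpa using (Complex.le_def.mp this).2.symm)
  have hp0 : ∀ x k, 0 ≤ p x k := fun x k =>
    (Complex.le_def.mp ((hpps x).diag_nonneg (i := k))).1
  have hp1 : ∀ x, ∑ k, p x k = 1 := by
    intro x
    have h1 : (V0ᴴ * W x * V0).trace = 1 := by
      rw [Matrix.trace_mul_comm, ← Matrix.mul_assoc, hV2, Matrix.one_mul, (hW x).2]
    have h2 := congrArg Complex.re h1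
    rw [Matrix.trace, Complex.re_sum] at h2
    simpa using h2
  have hps : ∀ k, ∑ x, P x * p x k = s k := by
    intro k
    have h1 : V0ᴴ * avgState P W * V0 = Matrix.diagonal (fun k => (s k : ℂ)) := by
      conv_lhs => rw [hσ]
      have : V0ᴴ * (V0 * Matrix.diagonal (fun k => (s k : ℂ)) * V0ᴴ) * V0
        = (V0ᴴ * V0) * Matrix.diagonal (fun k => (s k : ℂ)) * (V0ᴴ * V0) := by
        simp only [Matrix.mul_assoc]
      rw [this, hV1, Matrix.one_mul, Matrix.mul_one]
    have h2 : V0ᴴ * avgState P W * V0 = ∑ x, (P x : ℂ) • (V0ᴴ * W x * V0) := by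
      unfold avgState
      rw [Matrix.mul_sum, Matrix.sum_mul]
      simp
    have h3 := congrFun (congrFun (h1.symm.trans h2) k) k
    rw [Matrix.diagonal_apply_eq, Matrix.sum_apply] at h3
    simp only [Matrix.smul_apply, hpC, smul_eq_mul] at h3
    exact_mod_cast h3.symm
  -- per message bound
  have hmsg : ∀ m ∈ M, 1 - lam - 3 * ε ≤ 2 * (2 : ℝ) ^ β * (D m * E).trace.re := by
    intro m hm
    set xs := f m with hxs
    set ρ : MatPow d n := tensorPow (fun i => W (xs i)) with hρ
    set UU : MatPow d n := tensorPow (fun i => U (xs i)) with hUU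
    have hUU2 : UU * UUᴴ = 1 := by
      rw [hUU, sc_tensor_conj, sc_tensor_mul]
      simp only [hU2, sc_tensor_one]
    have hUU1 : UUᴴ * UU = 1 := by
      rw [hUU, sc_tensor_conj, sc_tensor_mul]
      simp only [hU1, sc_tensor_one]
    set Q : (Fin n → Fin d) → ℝ := fun js => ∏ i, q (xs i) (js i) with hQ
    have hQ0 : ∀ js, 0 ≤ Q js := fun js => Finset.prod_nonneg fun i _ => hq0 _ _
    have hρU : ρ = UU * Matrix.diagonal (fun js => (Q js : ℂ)) * UUᴴ := by
      have e : Matrix.diagonal (fun js => (Q js : ℂ))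
          = tensorPow (fun i => Matrix.diagonal (fun k => (q (xs i) k : ℂ))) := by
        rw [sc_tensor_diag]
        congr 1
        ext js
        simp [hQ]
      rw [e, hUU, sc_tensor_conj, sc_tensor_mul, sc_tensor_mul, hρ]
      congr 1
      ext1 i
      exact hWU (xs i)
    set B : Finset (Fin n → Fin d) := Finset.univ.filter fun js => Q js ≤ (2 : ℝ) ^ β with hB
    set ρ₁ : MatPow d n := UU * Matrix.diagonal (fun js => if js ∈ B then (Q js : ℂ) else 0) * UUᴴ
      with hρ₁
    set ρ₂ : MatPow d n := UU * Matrix.diagonal (fun js => if js ∈ B then 0 else (Q js : ℂ)) * UUᴴ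
      with hρ₂
    have hsum : ρ₁ + ρ₂ = ρ := by
      rw [hρ₁, hρ₂, hρU, ← Matrix.add_mul, ← Matrix.mul_add, Matrix.diagonal_add]
      congr 3
      ext js
      split_ifs <;> simp
    have h₁ : ρ₁.PosSemidef := by
      apply Matrix.PosSemidef.mul_mul_conjTranspose_same
      apply Matrix.PosSemidef.diagonal
      intro js
      simp only [Pi.zero_apply]
      split_ifs
      · exact_mod_cast hQ0 js
      · exact le_rfl
    have h₂ : ρ₂.PosSemidef := by
      apply Matrix.PosSemidef.mul_mul_conjTranspose_same
      apply Matrix.PosSemidef.diagonal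
      intro js
      simp only [Pi.zero_apply]
      split_ifs
      · exact le_rfl
      · exact_mod_cast hQ0 js
    have ht : ((((2 : ℝ) ^ β : ℝ) : ℂ) • (1 : MatPow d n) - ρ₁).PosSemidef := by
      have e : (((2 : ℝ) ^ β : ℝ) : ℂ) • (1 : MatPow d n) - ρ₁
          = UU * Matrix.diagonal (fun js => (((2 : ℝ) ^ β : ℝ) : ℂ) -
              if js ∈ B then (Q js : ℂ) else 0) * UUᴴ := by
        rw [← Matrix.diagonal_sub, Matrix.mul_sub, Matrix.sub_mul, ← hρ₁]
        congr 1
        rw [← Matrix.smul_one_eq_diagonal, Matrix.mul_smul, Matrix.smul_mul, Matrix.mul_one, hUU2]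
      rw [e]
      apply Matrix.PosSemidef.mul_mul_conjTranspose_same
      apply Matrix.PosSemidef.diagonal
      intro js
      simp only [Pi.zero_apply]
      split_ifs with hj
      · have := (Finset.mem_filter.mp hj).2
        rw [sub_nonneg]
        exact_mod_cast this
      · rw [sub_zero]
        exact_mod_cast (by positivity : (0 : ℝ) ≤ (2 : ℝ) ^ β)
    have hD1 : (1 - D m).PosSemidef := by
      rw [← hDsum, ← Finset.add_sum_erase _ _ (Finset.mem_univ m), add_sub_cancel_left]
      exact Matrix.posSemidef_sum _ fun i _ => hDps i
    have hmain := sc_one_shot h₁ h₂ (hDps m) hD1 hEH hEE ht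
    rw [hsum] at hmain
    have tail2 : ρ₂.trace.re ≤ ε := by
      have e : ρ₂.trace = ((∑ js ∈ Finset.univ.filter (fun js => js ∉ B), Q js : ℝ) : ℂ) := by
        have := sc_trace_conj_diag 1 UU (fun js => if js ∈ B then 0 else (Q js : ℂ))
        rw [Matrix.one_mul, ← hρ₂, Matrix.mul_one, hUU1] at this
        rw [this, Finset.sum_filter]
        push_cast
        apply Finset.sum_congr rfl
        intro js _
        by_cases hj : js ∈ B <;> simp [hj]
      rw [e, Complex.ofReal_re]
      refine sc_tail_B hn (fun i k => q (xs i) k) (fun i k => hq0 _ _) (fun i => hq1 _)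
        (n * condEntropy P W) ?_ δ ε hδ hε _ ?_
      · simp_rw [← hqH]
        exact htype m hm (fun x => vnEntropy (W x))
      · intro js hjs
        have := (Finset.mem_filter.mp hjs).2
        simpa [hB] using this
    have tail1 : (ρ * (1 - E)).trace.re ≤ ε := by
      have hdiag : ∀ js, (Vᴴ * ρ * V) js js = ((∏ i, p (xs i) (js i) : ℝ) : ℂ) := by
        intro js
        rw [hV, hρ, sc_tensor_conj, sc_tensor_mul, sc_tensor_mul]
        simp only [tensorPow, Matrix.of_apply, hpC]
        push_cast
        rfl
      have e : (ρ * (1 - E)).trace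
          = ((∑ js ∈ Finset.univ.filter (fun js => js ∉ A), ∏ i, p (xs i) (js i) : ℝ) : ℂ) := by
        rw [hFE, sc_trace_conj_diag, Finset.sum_filter]
        push_cast
        apply Finset.sum_congr rfl
        intro js _
        rw [hdiag]
        by_cases hj : js ∈ A <;> simp [hj]
      rw [e, Complex.ofReal_re]
      refine sc_tail_A hn (fun i k => p (xs i) k) (fun i k => hp0 _ _) (fun i => hp1 _)
        s hs0 hs1 ?_ δ ε hδ hε _ ?_
      · intro k
        rw [← hps]
        exact htype m hm (fun x => p x k)
      · intro js hjs
        have := (Finset.mem_filter.mp hjs).2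
        rw [hA, Finset.mem_filter] at this
        rw [← hsH]
        exact fun h => this ⟨Finset.mem_univ _, h⟩
    have := hdec m hm
    linarith
  -- sum up
  have hsumE : ∑ m ∈ M, (D m * E).trace.re ≤ A.card := by
    calc ∑ m ∈ M, (D m * E).trace.re ≤ ∑ m, (D m * E).trace.re :=
          Finset.sum_le_sum_of_subset_of_nonneg (Finset.subset_univ _)
            fun m _ _ => sc_trace_mul_nonneg (hDps m) hEps
      _ = ((∑ m, D m) * E).trace.re := by
          rw [Matrix.sum_mul, Matrix.trace_sum, Complex.re_sum]
      _ = A.card := by rw [hDsum, Matrix.one_mul, hEtr]; simp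
  calc (M.card : ℝ) * (1 - lam - 3 * ε) = ∑ m ∈ M, (1 - lam - 3 * ε) := by
        rw [Finset.sum_const, nsmul_eq_mul]
    _ ≤ ∑ m ∈ M, 2 * (2 : ℝ) ^ β * (D m * E).trace.re := Finset.sum_le_sum hmsg
    _ = 2 * (2 : ℝ) ^ β * ∑ m ∈ M, (D m * E).trace.re := by rw [Finset.mul_sum]
    _ ≤ 2 * (2 : ℝ) ^ β * (2 : ℝ) ^ α :=
        mul_le_mul_of_nonneg_left (hsumE.trans hAcard) (by positivity)
    _ = 2 * (2 : ℝ) ^ (n * mutualInfo P W + 2 * δ * Real.sqrt n) := by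
        rw [mul_assoc, ← Real.rpow_add (by norm_num)]
        congr 2
        rw [hα, hβ]; unfold mutualInfo; ring

lemma sc_types_count {n : ℕ} (hn : 0 < n) (a : ℕ) :
    ((n : ℝ) + 1) ^ a ≤ (2 : ℝ) ^ (2 * a * Real.sqrt n) := by
  have hn' : (1 : ℝ) ≤ n := by exact_mod_cast hn
  have h1 : 1 ≤ Real.sqrt n := Real.one_le_sqrt.mpr hn'
  have hb := one_add_mul_self_le_rpow_one_add (s := 1) (by norm_num) h1
  norm_num at hb
  have hsq : Real.sqrt n ^ 2 = n := Real.sq_sqrt (by linarith)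
  have h2 : (n : ℝ) + 1 ≤ ((2 : ℝ) ^ Real.sqrt n) ^ 2 := by
    have : (1 + Real.sqrt n) ^ 2 ≤ ((2 : ℝ) ^ Real.sqrt n) ^ 2 := by gcongr
    nlinarith
  calc ((n : ℝ) + 1) ^ a ≤ (((2 : ℝ) ^ Real.sqrt n) ^ 2) ^ a := by gcongr
    _ = (2 : ℝ) ^ (2 * a * Real.sqrt n) := by
      rw [← pow_mul, ← Real.rpow_mul_natCast (by norm_num)]
      congr 1
      push_cast; ring

/-- **Theorem 3 (Strong converse).** For every `λ ∈ (0,1)` there is a constant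
`K(λ,a,d)` such that every `(n,λ)`-code `(f,D)` for a cq-DMC `W` satisfies
`|M| ≤ exp₂(n C(W) + K√n)`. -/
theorem strong_converse (a d : ℕ) (lam : ℝ) (hlam : lam ∈ Set.Ioo (0 : ℝ) 1) :
    ∃ K : ℝ, ∀ (X : Type) [Fintype X], Fintype.card X = a →
      ∀ (W : X → Mat d), (∀ x, IsState (W x)) →
      ∀ (n : ℕ), 0 < n →
      ∀ (M' : Type) (_ : Fintype M') (M : Finset M') (f : M' → Fin n → X)
        (D : M' → MatPow d n), IsCode W lam M f D →
        (M.card : ℝ) ≤ exp2 ((n : ℝ) * capacity W + K * Real.sqrt n) := by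
  obtain ⟨hl0, hl1⟩ := hlam
  set ε : ℝ := (1 - lam) / 6 with hε
  have hεpos : 0 < ε := by rw [hε]; linarith
  set δ : ℝ := Real.sqrt (16 * (d + 1) / ε) with hδ
  have hδpos : 0 < δ := Real.sqrt_pos.mpr (by positivity)
  have hδε : 16 * (d : ℝ) ≤ ε * δ ^ 2 := by
    rw [hδ, Real.sq_sqrt (by positivity), mul_div_cancel₀ _ hεpos.ne']
    linarith
  have hc : 1 ≤ 4 / (1 - lam) := by
    rw [le_div_iff₀ (by linarith)]; linarith
  set c : ℝ := Real.logb 2 (4 / (1 - lam)) with hcdef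
  have hc0 : 0 ≤ c := Real.logb_nonneg (by norm_num) hc
  refine ⟨2 * a + 2 * δ + c, ?_⟩
  intro X _ hX W hW n hn M' _ M f D hcode
  have hn' : (0 : ℝ) < n := by exact_mod_cast hn
  have hs1 : 1 ≤ Real.sqrt n := Real.one_le_sqrt.mpr (by exact_mod_cast hn)
  let ty : M' → (X → Fin (n + 1)) := fun m x => ⟨countIn x (f m), by
    unfold countIn
    exact Nat.lt_succ_of_le ((Finset.card_le_univ _).trans (by simp))⟩
  have hfib : ∀ T : X → Fin (n + 1), ((M.filter fun m => ty m = T).card : ℝ) ≤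
      4 / (1 - lam) * (2 : ℝ) ^ (n * capacity W + 2 * δ * Real.sqrt n) := by
    intro T
    rcases (M.filter fun m => ty m = T).eq_empty_or_nonempty with he | ⟨m₀, hm₀⟩
    · rw [he]
      simp only [Finset.card_empty, Nat.cast_zero]
      positivity
    set P : X → ℝ := fun x => (T x : ℝ) / n with hPdef
    have htype : ∀ m ∈ M.filter (fun m => ty m = T), ∀ g : X → ℝ,
        ∑ i, g (f m i) = n * ∑ x, P x * g x := by
      intro m hm g
      have hT := (Finset.mem_filter.mp hm).2
      have hcnt : ∀ x, (T x : ℝ) = countIn x (f m) := by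
        intro x; rw [← hT]
      rw [Finset.mul_sum, ← Finset.sum_fiberwise (s := Finset.univ) (g := f m)]
      apply Finset.sum_congr rfl
      intro x _
      rw [Finset.sum_congr rfl (g := fun _ => g x)
        (fun i hi => by rw [(Finset.mem_filter.mp hi).2])]
      rw [Finset.sum_const, nsmul_eq_mul, hPdef]
      simp only [hcnt]
      rw [← mul_assoc, mul_div_cancel₀ _ hn'.ne']
      rfl
    have hP : IsProbDist P := by
      refine ⟨fun x => by positivity, ?_⟩
      have := htype m₀ hm₀ (fun _ => 1)
      simp only [Finset.sum_const, Finset.card_univ, Fintype.card_fin, nsmul_eq_mul,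
        mul_one] at this
      have h2 : (n : ℝ) * ∑ x, P x = n * 1 := by rw [mul_one]; exact this.symm
      exact mul_left_cancel₀ hn'.ne' h2
    have hsub : IsCode W lam (M.filter fun m => ty m = T) f D :=
      ⟨hcode.1, hcode.2.1, fun m hm => hcode.2.2 m (Finset.mem_filter.mp hm).1⟩
    have h1 := sc_type hn W hW P hP lam δ ε hδpos hδε _ f D hsub htype
    have h2 : (2 : ℝ) ^ (n * mutualInfo P W + 2 * δ * Real.sqrt n)
        ≤ (2 : ℝ) ^ (n * capacity W + 2 * δ * Real.sqrt n) := by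
      apply Real.rpow_le_rpow_of_exponent_le (by norm_num)
      have := mul_le_mul_of_nonneg_left (sc_le_capacity hP hW) hn'.le
      linarith
    have h3 : 1 - lam - 3 * ε = (1 - lam) / 2 := by rw [hε]; ring
    rw [h3] at h1
    rw [div_mul_eq_mul_div, le_div_iff₀ (by linarith)]
    linarith
  have hcard : (M.card : ℝ) ≤ ((n : ℝ) + 1) ^ a *
      (4 / (1 - lam) * (2 : ℝ) ^ (n * capacity W + 2 * δ * Real.sqrt n)) := by
    have h1 : M.card = ∑ T : X → Fin (n + 1), (M.filter fun m => ty m = T).card :=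
      Finset.card_eq_sum_card_fiberwise (fun m _ => Finset.mem_coe.mpr (Finset.mem_univ _))
    rw [h1]
    push_cast
    refine (Finset.sum_le_card_nsmul _ _ _ fun T _ => hfib T).trans ?_
    rw [nsmul_eq_mul, Finset.card_univ, Fintype.card_fun, Fintype.card_fin, hX]
    push_cast
    exact le_rfl
  refine hcard.trans ?_
  have hcc : 4 / (1 - lam) ≤ (2 : ℝ) ^ (c * Real.sqrt n) := by
    have : (2 : ℝ) ^ c = 4 / (1 - lam) :=
      Real.rpow_logb (by norm_num) (by norm_num) (by linarith)
    rw [← this]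
    apply Real.rpow_le_rpow_of_exponent_le (by norm_num)
    nlinarith
  calc _ ≤ (2 : ℝ) ^ (2 * a * Real.sqrt n) * ((2 : ℝ) ^ (c * Real.sqrt n) *
        (2 : ℝ) ^ (n * capacity W + 2 * δ * Real.sqrt n)) := by
        gcongr
        exact sc_types_count hn a
    _ = exp2 (n * capacity W + (2 * a + 2 * δ + c) * Real.sqrt n) := by
        unfold exp2
        rw [← Real.rpow_add (by norm_num), ← Real.rpow_add (by norm_num)]
        congr 1
        ring
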